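/- Let (τ*, n*) be an optimal solution of the linear program (LP). Then for every i ∈ {1, …, m} one has n*(i) = max(τ* − N_i, 0). -/

import Mathlib

open Finset

/-! If the bonuses `max (τ - N i) 0` left some of the budget `Q` unspent, then raising the common
level `τ` by a sufficiently small amount `δ` would still be affordable, as each bonus grows by at
most `δ`. At an optimum the pointwise smallest feasible allocation therefore already costs `Q`, and
an allocation dominating it within budget `Q` must coincide with it. -/

section Waterfill

variable {ι G : Type*} [AddCommGroup G] [LinearOrder G]

/-- The water-filling allocation: the amounts `max (τ - N i) 0` that lift every level `N i` lying
below `τ` up to `τ`. -/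
def waterfill (N : ι → G) (τ : G) : ι → G := fun i ↦ max (τ - N i) 0

variable [IsOrderedAddMonoid G] {N n : ι → G} {τ δ Q : G}

lemma waterfill_le_iff : waterfill N τ ≤ n ↔ (∀ i, 0 ≤ n i) ∧ ∀ i, τ ≤ N i + n i := by
  simp only [Pi.le_def, waterfill, max_le_iff, sub_le_iff_le_add', forall_and, and_comm]

lemma waterfill_add_apply_le (hδ : 0 ≤ δ) (i : ι) :
    waterfill N (τ + δ) i ≤ waterfill N τ i + δ := by
  calc max (τ + δ - N i) 0 ≤ max (τ - N i + δ) (0 + δ) :=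
        max_le_max (sub_add_eq_add_sub τ (N i) δ).ge (by rwa [zero_add])
    _ = max (τ - N i) 0 + δ := max_add_add_right _ _ _

variable [Fintype ι]

lemma sum_waterfill_add_le (hδ : 0 ≤ δ) :
    ∑ i, waterfill N (τ + δ) i ≤ ∑ i, waterfill N τ i + Fintype.card ι • δ := by
  calc ∑ i, waterfill N (τ + δ) i ≤ ∑ i, (waterfill N τ i + δ) :=
        sum_le_sum fun i _ ↦ waterfill_add_apply_le hδ i
    _ = ∑ i, waterfill N τ i + Fintype.card ι • δ := by
        rw [sum_add_distrib, sum_const, card_univ]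

lemma exists_gt_sum_waterfill_lt [DenselyOrdered G] (h : ∑ i, waterfill N τ i < Q) :
    ∃ σ > τ, ∑ i, waterfill N σ i < Q := by
  obtain ⟨δ, hδ, hδQ⟩ := exists_nsmul_lt_of_pos (sub_pos.mpr h) (Fintype.card ι)
  exact ⟨τ + δ, lt_add_of_pos_right τ hδ,
    (sum_waterfill_add_le hδ.le).trans_lt (lt_sub_iff_add_lt'.mp hδQ)⟩

end Waterfill

section LinearProgram

variable {ι G : Type*} [Fintype ι] [AddCommGroup G] [LinearOrder G]

/-- Feasibility of `(τ, n)` for the linear program (LP) with levels `N` and budget `Q`, over an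
ordered group `G` of quantities in place of `ℝ`. -/
def IsLPFeasible (N : ι → G) (Q τ : G) (n : ι → G) : Prop :=
  0 ≤ τ ∧ (∀ i, 0 ≤ n i) ∧ (∀ i, τ ≤ N i + n i) ∧ ∑ i, n i ≤ Q

/-- Optimality of `(τ, n)` for the linear program (LP), whose objective is the common level `τ`. -/
def IsLPOptimal (N : ι → G) (Q τ : G) (n : ι → G) : Prop :=
  IsLPFeasible N Q τ n ∧ ∀ σ k, IsLPFeasible N Q σ k → σ ≤ τ

variable [IsOrderedAddMonoid G] {N n : ι → G} {τ Q : G}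

lemma isLPFeasible_iff_waterfill_le :
    IsLPFeasible N Q τ n ↔ 0 ≤ τ ∧ waterfill N τ ≤ n ∧ ∑ i, n i ≤ Q := by
  rw [IsLPFeasible, waterfill_le_iff, and_assoc]

lemma IsLPOptimal.le_sum_waterfill [DenselyOrdered G] (h : IsLPOptimal N Q τ n) :
    Q ≤ ∑ i, waterfill N τ i := by
  by_contra! hlt
  obtain ⟨σ, hτσ, hσQ⟩ := exists_gt_sum_waterfill_lt hlt
  have hσ : IsLPFeasible N Q σ (waterfill N σ) :=
    isLPFeasible_iff_waterfill_le.mpr ⟨h.1.1.trans hτσ.le, le_rfl, hσQ.le⟩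
  exact hτσ.not_ge (h.2 σ _ hσ)

theorem lp_optimal_solution_eq_waterfill_general [DenselyOrdered G] (h : IsLPOptimal N Q τ n) :
    n = waterfill N τ := by
  obtain ⟨-, hle, hnQ⟩ := isLPFeasible_iff_waterfill_le.mp h.1
  have hsum : ∑ i, waterfill N τ i = ∑ i, n i :=
    (sum_le_sum fun i _ ↦ hle i).antisymm (hnQ.trans h.le_sum_waterfill)
  funext i
  exact ((sum_eq_sum_iff_of_le fun i _ ↦ hle i).mp hsum i (mem_univ i)).symm

end LinearProgram

/-- Let `(τstar, nstar)` be an optimal solution of the linear program (LP):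
maximize `τ` over `τ ≥ 0`, `n i ≥ 0` subject to `τ ≤ N i + n i` for all `i` and `∑ i, n i ≤ Q`.
Then for every `i`, `nstar i = max (τstar - N i) 0`. -/
theorem lp_optimal_solution_eq_waterfill
    (m : ℕ) (hm : 1 ≤ m) (N : Fin m → ℝ) (hN : ∀ i, 0 ≤ N i)
    (Q : ℝ) (hQ : 0 ≤ Q)
    (τstar : ℝ) (nstar : Fin m → ℝ)
    (hfeas : 0 ≤ τstar ∧ (∀ i, 0 ≤ nstar i) ∧ (∀ i, τstar ≤ N i + nstar i) ∧
      ∑ i, nstar i ≤ Q)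
    (hopt : ∀ τ : ℝ, ∀ n : Fin m → ℝ,
      (0 ≤ τ ∧ (∀ i, 0 ≤ n i) ∧ (∀ i, τ ≤ N i + n i) ∧ ∑ i, n i ≤ Q) → τ ≤ τstar) :
    ∀ i, nstar i = max (τstar - N i) 0 :=
  congr_fun (lp_optimal_solution_eq_waterfill_general ⟨hfeas, hopt⟩)
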